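/- Let μ, ν be Borel probability measures on a Polish space E, and c_n : E × E → [0,∞] a nondecreasing sequence of lower semicontinuous cost functions converging pointwise to a lower semicontinuous cost c. Then, along a subsequence, the optimal transport costs converge: lim_n inf_{λ∈Π(μ,ν)} ∫ c_n dλ = inf_{λ∈Π(μ,ν)} ∫ c dλ. -/

import Mathlib

/-!
The set of couplings of `μ` and `ν` is compact for weak convergence: it is tight because its
marginals are single tight measures (`IsTightMeasureSet.prodMk`), so Prokhorov's theorem applies,
and it is closed because the marginal maps are continuous. By the portmanteau theorem and the
layer cake formula, `ρ ↦ ∫⁻ f ∂ρ` is weakly lower semicontinuous for lower semicontinuous `f ≥ 0`.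

If `M` exceeds every optimal cost for `cn n`, the sets of couplings `ρ` with `∫⁻ cn n ∂ρ ≤ M` are
therefore nonempty, compact and decreasing in `n`. A coupling in their intersection satisfies
`∫⁻ c ∂ρ ≤ M` by monotone convergence, so the optimal cost for `c` is at most the supremum of those
for `cn n`. The reverse inequality is monotonicity, hence the whole sequence converges.
-/

open MeasureTheory Filter

/-- The optimal transport cost with cost `c`, as an infimum over couplings of `μ` and `ν`. -/
noncomputable def transportCost {E : Type*} [MeasurableSpace E]
    (μ ν : Measure E) (c : E × E → ENNReal) : ENNReal :=
  ⨅ π : {ρ : Measure (E × E) // ρ.map Prod.fst = μ ∧ ρ.map Prod.snd = ν},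
    ∫⁻ p, c p ∂(π : Measure (E × E))

open Set Topology

/-- Portmanteau inequality for a lower semicontinuous function with finite values. The layer cake
formula reduces it to the case of the open superlevel sets. -/
lemma lintegral_le_liminf_of_lsc_of_ne_top {X : Type*} [TopologicalSpace X] [HasOuterApproxClosed X]
    [MeasurableSpace X] [BorelSpace X] {f : X → ENNReal} (hf : LowerSemicontinuous f)
    (hfin : ∀ x, f x ≠ ⊤) {ρ : ProbabilityMeasure X} {ρs : ℕ → ProbabilityMeasure X}
    (h : Tendsto ρs atTop (𝓝 ρ)) :
    ∫⁻ x, f x ∂(ρ : Measure X) ≤ liminf (fun n => ∫⁻ x, f x ∂(ρs n : Measure X)) atTop := by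
  have key (σ : Measure X) :
      ∫⁻ x, f x ∂σ = ∫⁻ t in Ioi (0 : ℝ), σ {x | t < (f x).toReal} := by
    rw [← lintegral_eq_lintegral_meas_lt σ (Eventually.of_forall fun x => ENNReal.toReal_nonneg)
      hf.measurable.ennreal_toReal.aemeasurable]
    simp [ENNReal.ofReal_toReal (hfin _)]
  have hopen (t : ℝ) (ht : t ∈ Ioi (0 : ℝ)) : IsOpen {x | t < (f x).toReal} := by
    have : {x | t < (f x).toReal} = f ⁻¹' Ioi (ENNReal.ofReal t) := by
      ext x
      exact (ENNReal.ofReal_lt_iff_lt_toReal (le_of_lt ht) (hfin x)).symm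
    rw [this]
    exact hf.isOpen_preimage _
  simp_rw [key]
  calc _ ≤ ∫⁻ t in Ioi (0 : ℝ),
        liminf (fun n => (ρs n : Measure X) {x | t < (f x).toReal}) atTop :=
        setLIntegral_mono' measurableSet_Ioi fun t ht =>
          ProbabilityMeasure.le_liminf_measure_open_of_tendsto h (hopen t ht)
    _ ≤ _ := lintegral_liminf_le fun n => Antitone.measurable fun s t hst =>
          measure_mono fun x (hx : t < _) => lt_of_le_of_lt hst hx

/-- Portmanteau inequality for a `[0, ∞]`-valued lower semicontinuous function, by truncation. -/
lemma lintegral_le_liminf_of_lsc {X : Type*} [TopologicalSpace X] [HasOuterApproxClosed X]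
    [MeasurableSpace X] [BorelSpace X] {f : X → ENNReal} (hf : LowerSemicontinuous f)
    {ρ : ProbabilityMeasure X} {ρs : ℕ → ProbabilityMeasure X}
    (h : Tendsto ρs atTop (𝓝 ρ)) :
    ∫⁻ x, f x ∂(ρ : Measure X) ≤ liminf (fun n => ∫⁻ x, f x ∂(ρs n : Measure X)) atTop := by
  have hcap (x : X) : f x = ⨆ k : ℕ, min (f x) k := by
    rw [← inf_iSup_eq, ENNReal.iSup_natCast, inf_top_eq]
  have hlsc (k : ℕ) : LowerSemicontinuous fun x => min (f x) (k : ENNReal) :=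
    hf.inf lowerSemicontinuous_const
  calc ∫⁻ x, f x ∂(ρ : Measure X) = ∫⁻ x, ⨆ k : ℕ, min (f x) k ∂(ρ : Measure X) :=
        lintegral_congr hcap
    _ = ⨆ k : ℕ, ∫⁻ x, min (f x) k ∂(ρ : Measure X) :=
        lintegral_iSup (fun k => (hlsc k).measurable) fun i j hij x =>
          min_le_min le_rfl (by exact_mod_cast hij)
    _ ≤ _ := iSup_le fun k =>
        (lintegral_le_liminf_of_lsc_of_ne_top (hlsc k) (fun x => by simp) h).trans
          (liminf_le_liminf (Eventually.of_forall fun n =>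
            lintegral_mono fun x => min_le_left _ _))

lemma isClosed_setOf_lintegral_le {X : Type*} [TopologicalSpace X] [PolishSpace X]
    [MeasurableSpace X] [BorelSpace X] {f : X → ENNReal} (hf : LowerSemicontinuous f)
    (M : ENNReal) :
    IsClosed {ρ : ProbabilityMeasure X | ∫⁻ x, f x ∂(ρ : Measure X) ≤ M} := by
  let := TopologicalSpace.upgradeIsCompletelyMetrizable X
  refine IsSeqClosed.isClosed fun ρs ρ hρs hlim => ?_
  refine (lintegral_le_liminf_of_lsc hf hlim).trans ?_
  exact (liminf_le_liminf (Eventually.of_forall hρs)).trans (liminf_const M).le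

/-- The set of couplings of `μ` and `ν`, inside the space of probability measures with its weak
topology. -/
def couplings {E : Type*} [MeasurableSpace E] (μ ν : Measure E) :
    Set (ProbabilityMeasure (E × E)) :=
  {ρ | (ρ : Measure (E × E)).map Prod.fst = μ ∧ (ρ : Measure (E × E)).map Prod.snd = ν}

lemma isCompact_couplings {E : Type*} [TopologicalSpace E] [PolishSpace E]
    [MeasurableSpace E] [BorelSpace E]
    (μ ν : Measure E) [IsProbabilityMeasure μ] [IsProbabilityMeasure ν] :
    IsCompact (couplings μ ν) := by
  let := TopologicalSpace.upgradeIsCompletelyMetrizable E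
  have hclosed : IsClosed (couplings μ ν) := by
    have h1 : IsClosed {ρ : ProbabilityMeasure (E × E) |
        ρ.map (measurable_fst.aemeasurable (f := Prod.fst)) =
          (⟨μ, inferInstance⟩ : ProbabilityMeasure E)} :=
      isClosed_eq (ProbabilityMeasure.continuous_map continuous_fst) continuous_const
    have h2 : IsClosed {ρ : ProbabilityMeasure (E × E) |
        ρ.map (measurable_snd.aemeasurable (f := Prod.snd)) =
          (⟨ν, inferInstance⟩ : ProbabilityMeasure E)} :=
      isClosed_eq (ProbabilityMeasure.continuous_map continuous_snd) continuous_const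
    convert h1.inter h2 using 1
    ext ρ
    exact ⟨fun h => ⟨Subtype.ext h.1, Subtype.ext h.2⟩, fun h =>
      ⟨congrArg ProbabilityMeasure.toMeasure h.1, congrArg ProbabilityMeasure.toMeasure h.2⟩⟩
  rw [← hclosed.closure_eq]
  apply isCompact_closure_of_isTightMeasureSet
  apply IsTightMeasureSet.prodMk
  · refine (isTightMeasureSet_singleton (μ := μ)).subset ?_
    rintro _ ⟨_, ⟨ρ, hρ, rfl⟩, rfl⟩
    exact hρ.1
  · refine (isTightMeasureSet_singleton (μ := ν)).subset ?_
    rintro _ ⟨_, ⟨ρ, hρ, rfl⟩, rfl⟩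
    exact hρ.2

lemma transportCost_mono {E : Type*} [MeasurableSpace E] (μ ν : Measure E)
    {c c' : E × E → ENNReal} (h : c ≤ c') : transportCost μ ν c ≤ transportCost μ ν c' :=
  iInf_mono fun _ => lintegral_mono h

/-- The infimum defining `transportCost` ranges over arbitrary measures with marginals `μ` and `ν`;
these have total mass one, so they do belong to `couplings μ ν`. -/
lemma exists_coupling_lintegral_le {E : Type*} [MeasurableSpace E]
    (μ ν : Measure E) [IsProbabilityMeasure μ] {c : E × E → ENNReal} {M : ENNReal}
    (h : transportCost μ ν c < M) :
    ∃ ρ ∈ couplings μ ν, ∫⁻ p, c p ∂(ρ : Measure (E × E)) ≤ M := by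
  obtain ⟨⟨ρ, h1, h2⟩, hlt⟩ := iInf_lt_iff.1 h
  have : IsProbabilityMeasure ρ := by
    constructor
    rw [← preimage_univ (f := Prod.fst), ← Measure.map_apply measurable_fst .univ, h1, measure_univ]
  exact ⟨⟨ρ, this⟩, ⟨h1, h2⟩, hlt.le⟩

/-- Let `μ, ν` be Borel probability measures on a Polish space `E`, and `c_n` a nondecreasing
sequence of lower semicontinuous costs converging pointwise to a lower semicontinuous cost `c`.
Then, along a subsequence, the optimal transport costs converge to the optimal cost for `c`. -/
theorem stmt_7 {E : Type*} [TopologicalSpace E] [PolishSpace E]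
    [MeasurableSpace E] [BorelSpace E]
    (μ ν : Measure E) [IsProbabilityMeasure μ] [IsProbabilityMeasure ν]
    (c : E × E → ENNReal) (cn : ℕ → E × E → ENNReal)
    (hc : LowerSemicontinuous c) (hcn : ∀ n, LowerSemicontinuous (cn n))
    (hmono : ∀ n, cn n ≤ cn (n + 1)) (hle : ∀ n, cn n ≤ c)
    (hlim : ∀ p, Tendsto (fun n => cn n p) atTop (nhds (c p))) :
    ∃ φ : ℕ → ℕ, StrictMono φ ∧
      Tendsto (fun k => transportCost μ ν (cn (φ k))) atTop
        (nhds (transportCost μ ν c)) := by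
  have hmono' : Monotone cn := monotone_nat_of_le_succ hmono
  have hV : Monotone fun n => transportCost μ ν (cn n) :=
    fun _ _ hij => transportCost_mono μ ν (hmono' hij)
  have heq : ⨆ n, transportCost μ ν (cn n) = transportCost μ ν c := by
    refine le_antisymm (iSup_le fun n => transportCost_mono μ ν (hle n)) ?_
    refine le_of_forall_gt_imp_ge_of_dense fun M hM => ?_
    have hclosed (n : ℕ) : IsClosed
        (couplings μ ν ∩ {ρ | ∫⁻ p, cn n p ∂(ρ : Measure (E × E)) ≤ M}) :=
      (isCompact_couplings μ ν).isClosed.inter (isClosed_setOf_lintegral_le (hcn n) M)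
    obtain ⟨ρ, hρ⟩ := IsCompact.nonempty_iInter_of_sequence_nonempty_isCompact_isClosed
      (fun n => couplings μ ν ∩ {ρ | ∫⁻ p, cn n p ∂(ρ : Measure (E × E)) ≤ M})
      (fun n ρ hρ => ⟨hρ.1, (lintegral_mono (hmono n)).trans hρ.2⟩)
      (fun n => exists_coupling_lintegral_le μ ν
        ((le_iSup (fun n => transportCost μ ν (cn n)) n).trans_lt hM))
      ((isCompact_couplings μ ν).of_isClosed_subset (hclosed 0) inter_subset_left) hclosed
    rw [mem_iInter] at hρ
    calc transportCost μ ν c ≤ ∫⁻ p, c p ∂(ρ : Measure (E × E)) :=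
          iInf_le_of_le ⟨ρ, (hρ 0).1⟩ le_rfl
      _ = ∫⁻ p, ⨆ n, cn n p ∂(ρ : Measure (E × E)) := lintegral_congr fun p =>
          tendsto_nhds_unique (hlim p) (tendsto_atTop_iSup fun _ _ hij => hmono' hij p)
      _ = ⨆ n, ∫⁻ p, cn n p ∂(ρ : Measure (E × E)) :=
          lintegral_iSup (fun n => (hcn n).measurable) hmono'
      _ ≤ M := iSup_le fun n => (hρ n).2
  exact ⟨id, strictMono_id, heq ▸ tendsto_atTop_iSup hV⟩
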